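/- arXiv:1503.07211 — 4 statements merged into one kernel-verified Lean document; each statement's English description precedes it below -/
import Mathlib

section
/- Let k ≥ 1 and n ≥ 1. If the closure of F_{k,m,n} = { R∘Q : Q ∈ F_{k,m}, R ∈ F_{m,n} } equals Δ_{k,n}, then m ≥ ⌈(2^k(2^n − 1) − n)/(n+k+1)⌉. -/
open Finset

/-- The logistic sigmoid function `σ(a) = 1/(1+exp(-a))`. -/
noncomputable def sigmoid (a : ℝ) : ℝ := 1 / (1 + Real.exp (-a))

/-- Real value of a bit. -/
def bval (b : Bool) : ℝ := if b then 1 else 0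

/-- The set `F_{k,m}` of Markov kernels representable by a feedforward layer of `m`
sigmoid stochastic units with `k` binary inputs. -/
noncomputable def Fset (k m : ℕ) : Set ((Fin k → Bool) → (Fin m → Bool) → ℝ) :=
  {P | ∃ (V : Fin m → Fin k → ℝ) (c : Fin m → ℝ), ∀ y z,
    P y z = ∏ j, (if z j then sigmoid ((∑ i, V j i * bval (y i)) + c j)
                  else 1 - sigmoid ((∑ i, V j i * bval (y i)) + c j))}

/-- `Δ_{k,n}`: all Markov kernels from `{0,1}^k` to distributions on `{0,1}^n`. -/
def markovKernels (k n : ℕ) : Set ((Fin k → Bool) → (Fin n → Bool) → ℝ) :=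
  {P | (∀ y x, 0 ≤ P y x) ∧ ∀ y, ∑ x, P y x = 1}

/-- Composition of Markov kernels: `(R ∘ Q)(x|y) = ∑_z Q(z|y) R(x|z)`. -/
noncomputable def kcomp {k m n : ℕ} (R : (Fin m → Bool) → (Fin n → Bool) → ℝ)
    (Q : (Fin k → Bool) → (Fin m → Bool) → ℝ) : (Fin k → Bool) → (Fin n → Bool) → ℝ :=
  fun y x => ∑ z, Q y z * R z x

/-- `Δ_n`: probability distributions on `{0,1}^n`. -/
def simplex (n : ℕ) : Set ((Fin n → Bool) → ℝ) :=
  {p | (∀ x, 0 ≤ p x) ∧ ∑ x, p x = 1}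

/-- `Δ_n^+`: strictly positive probability distributions on `{0,1}^n`. -/
def simplexPos (n : ℕ) : Set ((Fin n → Bool) → ℝ) :=
  {p | (∀ x, 0 < p x) ∧ ∑ x, p x = 1}

/-- Mixture `p^⊤ R` of the rows of a kernel `R` with weights `p`. -/
noncomputable def mix {m n : ℕ} (p : (Fin m → Bool) → ℝ)
    (R : (Fin m → Bool) → (Fin n → Bool) → ℝ) : (Fin n → Bool) → ℝ :=
  fun x => ∑ z, p z * R z x

/-- `E_m`: strictly positive product distributions on `{0,1}^m`, where the `j`-th bit
is `0` with probability `q j ∈ (0,1)`. -/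
def Eset (m : ℕ) : Set ((Fin m → Bool) → ℝ) :=
  {p | ∃ q : Fin m → ℝ, (∀ j, q j ∈ Set.Ioo (0:ℝ) 1) ∧
    ∀ z, p z = ∏ j, (if z j then 1 - q j else q j)}

/-- Integer value of a binary vector (bit `i` has weight `2^i`). -/
def intval {k : ℕ} (y : Fin k → Bool) : ℕ := ∑ i, if y i then 2 ^ (i : ℕ) else 0

/-- `l(z)`: position (1-based) of the largest nonzero entry of `z`, and `0` if `z = 0`. -/
def lidx {N : ℕ} (z : Fin N → Bool) : ℕ :=
  (Finset.univ.filter (fun j => z j = true)).sup (fun j => (j : ℕ) + 1)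

/-- `bin_n(l)`: the `n`-bit binary representation of `l`. -/
def binVec (n l : ℕ) : Fin n → Bool := fun i => Nat.testBit l (i : ℕ)

/-- Point measure at `x ∈ {0,1}^n`. -/
noncomputable def deltaAt {n : ℕ} (x : Fin n → Bool) : (Fin n → Bool) → ℝ :=
  fun x' => if x' = x then 1 else 0

/-- Polynomials without zeros at points of the form `exp (-t)`. -/
noncomputable def posS (ι : Type) : Submonoid (MvPolynomial ι ℝ) where
  carrier := {q | ∀ t : ι → ℝ, MvPolynomial.aeval (fun i => Real.exp (-(t i))) q ≠ (0:ℝ)}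
  one_mem' := by intro t; simp
  mul_mem' := by
    intro a b ha hb t
    rw [map_mul]
    exact mul_ne_zero (ha t) (hb t)

lemma posS_le (ι : Type) : posS ι ≤ nonZeroDivisors (MvPolynomial ι ℝ) := by
  intro q hq
  rw [mem_nonZeroDivisors_iff_ne_zero]
  rintro rfl
  exact hq 0 (by simp)

/-- The ring of rational functions that are regular on the positive orthant. -/
abbrev RegL (ι : Type) := Localization (posS ι)

/-- Evaluation of a regular rational function. -/
noncomputable def evL {ι : Type} (t : ι → ℝ) : RegL ι →ₐ[ℝ] ℝ :=
  IsLocalization.liftAlgHom (M := posS ι)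
    (f := MvPolynomial.aeval (R := ℝ) (fun i => Real.exp (-(t i))))
    (fun q => (q.2 t).isUnit)

lemma alg_dep {ι κ : Type} [Fintype ι] [Fintype κ] (hc : Fintype.card ι < Fintype.card κ)
    (p : κ → RegL ι) : ∃ f : MvPolynomial κ ℝ, f ≠ 0 ∧ MvPolynomial.aeval p f = 0 := by
  by_contra hcon
  push Not at hcon
  have hind : AlgebraicIndependent ℝ p := by
    rw [algebraicIndependent_iff]
    intro f hf
    by_contra h0
    exact hcon f h0 hf
  have : IsDomain (RegL ι) := IsLocalization.isDomain_localization (posS_le ι)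
  have : Algebra.IsAlgebraic (MvPolynomial ι ℝ) (RegL ι) :=
    IsLocalization.isAlgebraic _ (posS ι)
  have : FaithfulSMul (MvPolynomial ι ℝ) (RegL ι) :=
    (faithfulSMul_iff_algebraMap_injective _ _).2 (IsLocalization.injective _ (posS_le ι))
  have hb := (IsTranscendenceBasis.mvPolynomial ι ℝ).algebraMap_comp (A := RegL ι)
  have h1 := hb.cardinalMk_eq_trdeg
  have h2 := hind.cardinalMk_le_trdeg
  rw [← h1, Cardinal.mk_fintype, Cardinal.mk_fintype, Nat.cast_le] at h2
  omega

/-- Denominator of a sigmoid unit. -/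
noncomputable def den {ι : Type} {k : ℕ} (a : Fin k → ι) (c : ι) (y : Fin k → Bool) :
    MvPolynomial ι ℝ :=
  1 + MvPolynomial.X c * ∏ i, (if y i then MvPolynomial.X (a i) else 1)

lemma aeval_den {ι : Type} {k : ℕ} (a : Fin k → ι) (c : ι) (y : Fin k → Bool) (t : ι → ℝ) :
    MvPolynomial.aeval (fun i => Real.exp (-(t i))) (den a c y) =
      1 + Real.exp (-((∑ i, t (a i) * bval (y i)) + t c)) := by
  have h : ∏ i, (if y i then Real.exp (-(t (a i))) else 1) =
      Real.exp (-(∑ i, t (a i) * bval (y i))) := by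
    rw [← Finset.sum_neg_distrib, Real.exp_sum]
    refine Finset.prod_congr rfl fun i _ => ?_
    cases y i <;> simp [bval]
  rw [neg_add, Real.exp_add, ← h, mul_comm]
  simp only [den, map_add, map_one, map_mul, MvPolynomial.aeval_X, map_prod]
  congr 2
  refine Finset.prod_congr rfl fun i _ => ?_
  cases y i <;> simp

lemma den_mem {ι : Type} {k : ℕ} (a : Fin k → ι) (c : ι) (y : Fin k → Bool) :
    den a c y ∈ posS ι := by
  intro t
  rw [aeval_den]
  positivity

/-- A sigmoid unit as a regular rational function. -/
noncomputable def sg {ι : Type} {k : ℕ} (a : Fin k → ι) (c : ι) (y : Fin k → Bool) : RegL ι :=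
  IsLocalization.mk' (RegL ι) 1 (⟨den a c y, den_mem a c y⟩ : posS ι)

lemma evL_sg {ι : Type} {k : ℕ} (a : Fin k → ι) (c : ι) (y : Fin k → Bool) (t : ι → ℝ) :
    evL t (sg a c y) = sigmoid ((∑ i, t (a i) * bval (y i)) + t c) := by
  have h : evL t (sg a c y) * evL t (algebraMap _ _ (den a c y)) = 1 := by
    rw [← map_mul, sg]
    have := IsLocalization.mk'_spec (RegL ι) 1 (⟨den a c y, den_mem a c y⟩ : posS ι)
    simp only at this
    rw [this]
    simp
  have h2 : evL t (algebraMap _ _ (den a c y)) =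
      1 + Real.exp (-((∑ i, t (a i) * bval (y i)) + t c)) := by
    rw [← aeval_den]
    simp [evL]
  rw [h2] at h
  rw [sigmoid]
  exact eq_one_div_of_mul_eq_one_left h

/-- A layer of sigmoid units as regular rational functions. -/
noncomputable def layer {ι : Type} {k m : ℕ} (a : Fin m → Fin k → ι) (c : Fin m → ι)
    (y : Fin k → Bool) (z : Fin m → Bool) : RegL ι :=
  ∏ j, (if z j then sg (a j) (c j) y else 1 - sg (a j) (c j) y)

lemma evL_layer {ι : Type} {k m : ℕ} (a : Fin m → Fin k → ι) (c : Fin m → ι)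
    (y : Fin k → Bool) (z : Fin m → Bool) (t : ι → ℝ) :
    evL t (layer a c y z) =
      ∏ j, (if z j then sigmoid ((∑ i, t (a j i) * bval (y i)) + t (c j))
                  else 1 - sigmoid ((∑ i, t (a j i) * bval (y i)) + t (c j))) := by
  rw [layer, map_prod]
  refine Finset.prod_congr rfl fun j _ => ?_
  cases z j <;> simp [evL_sg]

/-- Parameter index type. -/
abbrev Par (k m n : ℕ) := ((Fin m × Fin k) ⊕ Fin m) ⊕ ((Fin n × Fin m) ⊕ Fin n)

/-- Coordinate index type. -/
abbrev Coord (k n : ℕ) := (Fin k → Bool) × {x : Fin n → Bool // x ≠ fun _ => false}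

lemma exists_vanishing (k n m : ℕ) (hc : Fintype.card (Par k m n) < Fintype.card (Coord k n)) :
    ∃ f : MvPolynomial (Coord k n) ℝ, f ≠ 0 ∧
      ∀ P ∈ {P | ∃ Q ∈ Fset k m, ∃ R ∈ Fset m n, P = kcomp R Q},
        MvPolynomial.eval (fun i : Coord k n => P i.1 i.2.1) f = 0 := by
  let a : Fin m → Fin k → Par k m n := fun j i => .inl (.inl (j, i))
  let c : Fin m → Par k m n := fun j => .inl (.inr j)
  let b : Fin n → Fin m → Par k m n := fun j i => .inr (.inl (j, i))
  let d : Fin n → Par k m n := fun j => .inr (.inr j)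
  obtain ⟨f, hf0, hf⟩ := alg_dep hc
    (fun i : Coord k n => ∑ z, layer a c i.1 z * layer b d z i.2.1)
  refine ⟨f, hf0, ?_⟩
  rintro P ⟨Q, ⟨V, v, hQ⟩, R, ⟨W, w, hR⟩, rfl⟩
  let t : Par k m n → ℝ := Sum.elim (Sum.elim (fun p => V p.1 p.2) v)
    (Sum.elim (fun p => W p.1 p.2) w)
  have h := congrArg (evL t) hf
  rw [map_zero, MvPolynomial.comp_aeval_apply, MvPolynomial.aeval_eq_eval] at h
  rw [← h]
  congr 2
  funext i
  simp only [kcomp, map_sum, map_mul, evL_layer, hQ, hR]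
  rfl

lemma vanish_zero (k n : ℕ) (f : MvPolynomial (Coord k n) ℝ)
    (hf : ∀ P ∈ markovKernels k n, MvPolynomial.eval (fun i : Coord k n => P i.1 i.2.1) f = 0) :
    f = 0 := by
  refine MvPolynomial.funext_set (fun _ => Set.Ioo (0:ℝ) (1 / 2 ^ n))
    (fun _ => Set.Ioo_infinite (by positivity)) fun u hu => ?_
  have hu' : ∀ i, 0 < u i ∧ u i < 1 / 2 ^ n := fun i => hu i (Set.mem_univ _)
  rw [map_zero]
  let P : (Fin k → Bool) → (Fin n → Bool) → ℝ := fun y x =>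
    if hx : x ≠ fun _ => false then u (y, ⟨x, hx⟩)
    else 1 - ∑ x' : {x : Fin n → Bool // x ≠ fun _ => false}, u (y, x')
  have hP : ∀ y (x : {x : Fin n → Bool // x ≠ fun _ => false}), P y x.1 = u (y, x) := by
    intro y x
    simp only [P]
    rw [dif_pos x.2]
  have hP0 : ∀ y, P y (fun _ => false) =
      1 - ∑ x' : {x : Fin n → Bool // x ≠ fun _ => false}, u (y, x') := by
    intro y
    simp [P]
  have key := hf P ⟨?_, ?_⟩
  · rw [← key]
    congr 1
    congr 1
    funext i
    rw [hP]
  · intro y x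
    by_cases hx : x = fun _ => false
    · rw [hx, hP0, sub_nonneg]
      calc _ ≤ ∑ x' : {x : Fin n → Bool // x ≠ fun _ => false}, (1 / 2 ^ n : ℝ) :=
            Finset.sum_le_sum fun i _ => (hu' _).2.le
        _ ≤ ∑ x' : (Fin n → Bool), (1 / 2 ^ n : ℝ) := by
            rw [Finset.sum_const, Finset.sum_const, nsmul_eq_mul, nsmul_eq_mul]
            gcongr
            exact Fintype.card_subtype_le _
        _ = 1 := by simp
    · rw [hP y ⟨x, hx⟩]
      exact (hu' _).1.le
  · intro y
    rw [Fintype.sum_eq_add_sum_subtype_ne _ (fun _ => false), hP0]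
    simp only [hP]
    ring

/-- Proposition 3, second part (lower bound, all weights free): if the closure of
`F_{k,m,n}` equals `Δ_{k,n}`, then `m ≥ ⌈(2^k (2^n - 1) - n) / (n+k+1)⌉`. -/
theorem lower_bound_feedforward
    (k n m : ℕ) (hk : 1 ≤ k) (hn : 1 ≤ n)
    (h : closure {P | ∃ Q ∈ Fset k m, ∃ R ∈ Fset m n, P = kcomp R Q} = markovKernels k n) :
    ⌈(2 ^ k * (2 ^ n - 1) - n : ℝ) / (n + k + 1)⌉₊ ≤ m := by
  rw [Nat.ceil_le, div_le_iff₀ (by positivity)]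
  by_contra hlt
  push Not at hlt
  have hc : Fintype.card (Par k m n) < Fintype.card (Coord k n) := by
    have h2 : 1 ≤ 2 ^ n := Nat.one_le_two_pow
    have e : Fintype.card (Coord k n) = 2 ^ k * (2 ^ n - 1) := by
      simp [Fintype.card_subtype_compl]
    rw [e]
    simp only [Fintype.card_sum, Fintype.card_prod, Fintype.card_fin]
    rw [← Nat.cast_lt (α := ℝ)]
    push_cast [h2]
    linarith
  obtain ⟨f, hf0, hf⟩ := exists_vanishing k n m hc
  refine hf0 (vanish_zero k n f ?_)
  rw [← h]
  have hcl : IsClosed {P : (Fin k → Bool) → (Fin n → Bool) → ℝ |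
      MvPolynomial.eval (fun i : Coord k n => P i.1 i.2.1) f = 0} := by
    refine isClosed_eq ?_ continuous_const
    exact (MvPolynomial.continuous_eval f).comp (by fun_prop)
  exact fun P hP => closure_minimal hf hcl hP
end

section
/- Let k ≥ 1 and let y', y'' ∈ {0,1}^k differ in exactly one entry, and let q', q'' be any two probability distributions on {0,1}. Then the kernel p ∈ Δ_{k,1} defined by p(·|y') = q', p(·|y'') = q'', and p(·|y) = δ_0 (the point measure at 0) for all other y ∈ {0,1}^k, lies in the closure of F_{k,1}. -/
open Finset

/-- Auxiliary kernel. -/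
noncomputable def auxK {k : ℕ} (y' y'' : Fin k → Bool) (s t : ℝ) :
    (Fin k → Bool) → (Fin 1 → Bool) → ℝ :=
  fun y z => if y = y' then (if z 0 then s else 1 - s)
    else if y = y'' then (if z 0 then t else 1 - t) else (if z 0 then 0 else 1)

lemma aux_surj (s : ℝ) (h : s ∈ Set.Ioo (0:ℝ) 1) : ∃ a, sigmoid a = s := by
  obtain ⟨h0, h1⟩ := h
  refine ⟨-Real.log ((1 - s) / s), ?_⟩
  unfold sigmoid
  rw [neg_neg, Real.exp_log (div_pos (by linarith) h0)]
  field_simp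
  ring

lemma aux_lim : Filter.Tendsto sigmoid Filter.atBot (nhds 0) := by
  unfold sigmoid
  simp only [one_div]
  apply Filter.Tendsto.inv_tendsto_atTop
  apply Filter.tendsto_atTop_add_const_left
  exact Real.tendsto_exp_atTop.comp Filter.tendsto_neg_atBot_atTop

lemma aux_inner {k : ℕ} (y' y'' : Fin k → Bool) (l : Fin k)
    (hne : y' l ≠ y'' l) (heq : ∀ i, i ≠ l → y' i = y'' i) (A B : ℝ) :
    auxK y' y'' (sigmoid A) (sigmoid B) ∈ closure (Fset k 1) := by
  let D : (Fin k → Bool) → ℝ := fun y => ∑ i, if i = l then 0 else if y i = y' i then 0 else -1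
  let d : ℝ := bval (y'' l) - bval (y' l)
  let g : ℕ → (Fin k → Bool) → ℝ := fun n y =>
    A + (B - A) * d * (bval (y l) - bval (y' l)) + n * D y
  have hD0 : ∀ y, (∀ i, i ≠ l → y i = y' i) → D y = 0 := by
    intro y h
    apply Finset.sum_eq_zero
    intro i _
    by_cases hi : i = l <;> simp [hi]
    exact h i hi
  have hDneg : ∀ y, y ≠ y' → y ≠ y'' → D y < 0 := by
    intro y h1 h2
    have : ∃ i, i ≠ l ∧ y i ≠ y' i := by
      by_contra! hcon
      by_cases hl : y l = y' l
      · apply h1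
        funext i
        by_cases hi : i = l
        · rw [hi, hl]
        · exact hcon i hi
      · apply h2
        funext i
        by_cases hi : i = l
        · rw [hi]
          revert hl hne
          cases y l <;> cases y' l <;> cases y'' l <;> simp
        · rw [hcon i hi, heq i hi]
    obtain ⟨i, hi, hy⟩ := this
    apply Finset.sum_neg'
    · intro j _
      split_ifs <;> norm_num
    · exact ⟨i, Finset.mem_univ _, by simp [hi, hy]⟩
  refine mem_closure_of_tendsto (b := Filter.atTop)
    (f := fun (n : ℕ) y (z : Fin 1 → Bool) =>
      if z 0 then sigmoid (g n y) else 1 - sigmoid (g n y)) ?_ ?_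
  · have key : ∀ y, Filter.Tendsto (fun n => sigmoid (g n y)) Filter.atTop
        (nhds (if y = y' then sigmoid A else if y = y'' then sigmoid B else 0)) := by
      intro y
      by_cases h1 : y = y'
      · have : ∀ n, g n y = A := by
          intro n
          simp only [g]
          rw [hD0 y (by simp [h1]), h1]
          ring
        simp only [this]
        simp [h1]
      · by_cases h2 : y = y''
        · have hd : d * d = 1 := by
            simp only [d]
            revert hne
            cases y' l <;> cases y'' l <;> simp [bval]
          have : ∀ n, g n y = B := by
            intro n
            simp only [g]
            rw [hD0 y (by intro i hi; rw [h2, heq i hi]), h2]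
            change A + (B - A) * d * d + _ = B
            rw [mul_assoc, hd]
            ring
          have h3 : ¬ y'' = y' := h2 ▸ h1
          simp only [this]
          simp [h2, h3]
        · simp only [h1, h2, if_false]
          apply aux_lim.comp
          apply Filter.tendsto_atBot_add_const_left
          exact (tendsto_natCast_atTop_atTop).atTop_mul_const_of_neg (hDneg y h1 h2)
    rw [tendsto_pi_nhds]
    intro y
    rw [tendsto_pi_nhds]
    intro z
    have h := key y
    unfold auxK
    cases hz : z 0
    · convert h.const_sub 1 using 2
      · simp
      · split_ifs <;> simp_all
    · convert h using 2
      · simp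
      · split_ifs <;> simp_all
  · refine Filter.Eventually.of_forall fun n => ?_
    let V : Fin k → ℝ := fun i => if i = l then (B - A) * d else n * (if y' i then 1 else -1)
    refine ⟨fun _ => V, fun _ => A - ∑ i, V i * bval (y' i), ?_⟩
    intro y z
    have : (∑ i, V i * bval (y i)) + (A - ∑ i, V i * bval (y' i)) = g n y := by
      have h1 : ∑ i, (V i * bval (y i) - V i * bval (y' i)) =
          ∑ i, ((if i = l then (B - A) * d * (bval (y i) - bval (y' i)) else 0) +
            n * (if i = l then 0 else if y i = y' i then 0 else -1)) := by
        apply Finset.sum_congr rfl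
        intro i _
        by_cases hi : i = l
        · simp [V, hi]; ring
        · simp only [V, hi, if_false]
          cases y i <;> cases y' i <;> simp [bval]
      rw [Finset.sum_sub_distrib, Finset.sum_add_distrib, ← Finset.mul_sum] at h1
      simp only [Finset.sum_ite_eq', Finset.mem_univ, if_true] at h1
      simp only [g, D]
      linarith
    simp [this]

lemma aux_simplex (q : (Fin 1 → Bool) → ℝ) (hq : q ∈ simplex 1) :
    ∃ s ∈ Set.Icc (0:ℝ) 1, ∀ z, q z = if z 0 then s else 1 - s := by
  obtain ⟨h0, h1⟩ := hq
  have h2 : q (fun _ => true) + q (fun _ => false) = 1 := by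
    rw [← h1, ← (Equiv.funUnique (Fin 1) Bool).symm.sum_comp, Fintype.sum_bool]
    rfl
  refine ⟨q (fun _ => true), ⟨h0 _, by linarith [h0 (fun _ => false)]⟩, ?_⟩
  intro z
  have hz : z = fun _ => z 0 := by
    funext i
    rw [Subsingleton.elim i 0]
  cases h : z 0
  · rw [hz, h]; simp; linarith
  · rw [hz, h]; simp

/-- Lemma 1: if `y'` and `y''` differ in exactly one entry and `q', q''` are any two
distributions on `{0,1}`, then the kernel sending `y' ↦ q'`, `y'' ↦ q''` and every other
input to the point measure at `0` lies in the closure of `F_{k,1}`. -/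
theorem edge_pair_kernel_mem_closure
    (k : ℕ) (hk : 1 ≤ k) (y' y'' : Fin k → Bool) (l : Fin k)
    (hne : y' l ≠ y'' l) (heq : ∀ i, i ≠ l → y' i = y'' i)
    (q' q'' : (Fin 1 → Bool) → ℝ) (hq' : q' ∈ simplex 1) (hq'' : q'' ∈ simplex 1) :
    (fun y => if y = y' then q' else if y = y'' then q''
              else deltaAt (fun _ => false)) ∈ closure (Fset k 1) := by
  obtain ⟨s, hs, hqs⟩ := aux_simplex q' hq'
  obtain ⟨t, ht, hqt⟩ := aux_simplex q'' hq''
  have hK : (fun y => if y = y' then q' else if y = y'' then q''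
              else deltaAt (fun _ => false)) = auxK y' y'' s t := by
    funext y z
    unfold auxK
    split_ifs with h1 h2 h3 h4 h5 <;> simp_all [deltaAt]
    · intro h; simp [h] at *
    · funext i
      rw [Subsingleton.elim i 0]
      assumption
  rw [hK]
  have hmem : (s, t) ∈ closure (Set.Ioo (0:ℝ) 1 ×ˢ Set.Ioo (0:ℝ) 1) := by
    rw [closure_prod_eq, closure_Ioo (by norm_num)]
    exact ⟨hs, ht⟩
  have hcont : Continuous (fun p : ℝ × ℝ => auxK y' y'' p.1 p.2) := by
    refine continuous_pi fun y => continuous_pi fun z => ?_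
    unfold auxK
    split_ifs <;> fun_prop
  have := map_mem_closure (t := closure (Fset k 1)) hcont hmem (by
    rintro ⟨a, b⟩ ⟨ha, hb⟩
    obtain ⟨A, rfl⟩ := aux_surj a ha
    obtain ⟨B, rfl⟩ := aux_surj b hb
    exact aux_inner y' y'' l hne heq A B)
  rwa [closure_closure] at this
end

section
/- Let k ≥ 1, N ≥ 1 and m = 2^{k-1}·N. For each y ∈ {0,1}^k let p(·|y) be an arbitrary strictly positive product distribution in E_N. Partition the hidden state h ∈ {0,1}^m into 2^{k-1} consecutive blocks h^0, …, h^{2^{k-1}−1} of length N each. Then the Markov kernel P ∈ Δ_{k,m} given by P(h|y) = p(h^{⌊int(y)/2⌋}|y) · ∏_{i ≠ ⌊int(y)/2⌋} δ_0(h^i) (i.e., block number ⌊int(y)/2⌋ is distributed according to p(·|y) and all other blocks are all-zero with probability one) lies in the closure of F_{k,m}. -/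
open Finset

/-- Index of the `j`-th unit of the `i`-th block, for `B` consecutive blocks of `N` units. -/
def blk (B N : ℕ) (i : Fin B) (j : Fin N) : Fin (B * N) :=
  ⟨(i : ℕ) * N + (j : ℕ), by
    calc (i : ℕ) * N + (j : ℕ) < (i : ℕ) * N + N := Nat.add_lt_add_left j.isLt _
      _ = ((i : ℕ) + 1) * N := by ring
      _ ≤ B * N := Nat.mul_le_mul_right N i.isLt⟩

open Filter Topology in
lemma aux_tendsto_sigmoid_atBot : Tendsto sigmoid atBot (𝓝 0) := by
  unfold sigmoid
  refine Tendsto.div_atTop tendsto_const_nhds ?_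
  exact tendsto_atTop_add_const_left _ _ (Real.tendsto_exp_atTop.comp tendsto_neg_atBot_atTop)

lemma aux_sigmoid_surj (x : ℝ) (h0 : 0 < x) (h1 : x < 1) : ∃ a, sigmoid a = x := by
  refine ⟨-Real.log (1 / x - 1), ?_⟩
  have : 0 < 1 / x - 1 := by
    rw [sub_pos, lt_div_iff₀ h0]; linarith
  unfold sigmoid
  rw [neg_neg, Real.exp_log this]
  field_simp
  ring

lemma aux_intval_succ {k : ℕ} (y : Fin (k + 1) → Bool) :
    intval y = (if y 0 then 1 else 0) + 2 * intval (fun l : Fin k => y l.succ) := by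
  unfold intval
  rw [Fin.sum_univ_succ, Finset.mul_sum]
  congr 1
  refine Finset.sum_congr rfl fun l _ => ?_
  split_ifs
  · simp [pow_succ, mul_comm]
  · simp

lemma aux_intval_half {k : ℕ} (y : Fin (k + 1) → Bool) :
    intval y / 2 = intval (fun l : Fin k => y l.succ) := by
  rw [aux_intval_succ]
  split_ifs <;> omega

lemma aux_intval_inj : ∀ {k : ℕ} (y w : Fin k → Bool), intval y = intval w → y = w
  | 0, y, w, _ => Subsingleton.elim _ _
  | k + 1, y, w, h => by
    have ht : (fun l : Fin k => y l.succ) = fun l : Fin k => w l.succ := by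
      apply aux_intval_inj
      rw [← aux_intval_half, ← aux_intval_half, h]
    have h0 : y 0 = w 0 := by
      rw [aux_intval_succ, aux_intval_succ w, ht] at h
      cases hy : y 0 <;> cases hw : w 0 <;> simp_all
    funext l
    refine Fin.cases h0 (fun l => congrFun ht l) l

/-- Each unit can be tuned to the prescribed activations on the pair of inputs `y` with
`⌊int(y)/2⌋ = i`, and switched off elsewhere, in the limit `t → ∞`. -/
lemma aux_unit (k i : ℕ) (r : (Fin (k + 1) → Bool) → ℝ) (hr : ∀ y, 0 < r y ∧ r y < 1) :
    ∃ (V : ℝ → Fin (k + 1) → ℝ) (c : ℝ → ℝ), ∀ y,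
      Filter.Tendsto (fun t => sigmoid ((∑ l, V t l * bval (y l)) + c t)) Filter.atTop
        (nhds (if i = intval y / 2 then r y else 0)) := by
  by_cases hw : ∃ w : Fin k → Bool, intval w = i
  · obtain ⟨w, rfl⟩ := hw
    choose a ha using fun b : Bool =>
      aux_sigmoid_surj (r (Fin.cons b w)) (hr _).1 (hr _).2
    refine ⟨fun t => Fin.cons (a true - a false) (fun l => t * (2 * bval (w l) - 1)),
      fun t => a false - t * ∑ l, bval (w l), fun y => ?_⟩
    have key : ∀ t : ℝ, (∑ l, (Fin.cons (a true - a false)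
          (fun l => t * (2 * bval (w l) - 1)) : Fin (k + 1) → ℝ) l * bval (y l))
          + (a false - t * ∑ l, bval (w l))
        = a (y 0) + (- ∑ l : Fin k, if w l = y l.succ then (0 : ℝ) else 1) * t := by
      intro t
      have h1 : ∀ l : Fin k, (if w l = y l.succ then (0 : ℝ) else 1)
          = bval (w l) - (2 * bval (w l) - 1) * bval (y l.succ) := by
        intro l
        cases w l <;> cases y l.succ <;> norm_num [bval]
      have h2 : (a true - a false) * bval (y 0) + a false = a (y 0) := by
        cases y 0 <;> simp [bval]
      rw [Fin.sum_univ_succ, Finset.sum_congr rfl (fun l _ => h1 l), Finset.sum_sub_distrib]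
      simp only [Fin.cons_zero, Fin.cons_succ, mul_assoc, ← Finset.mul_sum]
      rw [← h2]
      ring
    simp only [key]
    rw [aux_intval_half]
    split_ifs with h
    · have hwy := aux_intval_inj _ _ h
      have hy : y = Fin.cons (y 0) w := by
        rw [hwy]
        exact (Fin.cons_self_tail y).symm
      have hz : (∑ l : Fin k, if w l = y l.succ then (0 : ℝ) else 1) = 0 :=
        Finset.sum_eq_zero fun l _ => if_pos (congrFun hwy l)
      have hry : sigmoid (a (y 0)) = r y := by
        rw [ha, ← hy]
      simp only [hz, neg_zero, zero_mul, add_zero, hry]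
      exact tendsto_const_nhds
    · have hne : ∃ l : Fin k, w l ≠ y l.succ := by
        by_contra! hc
        exact h (congrArg intval (funext hc))
      obtain ⟨l, hl⟩ := hne
      have hpos : 0 < ∑ l : Fin k, if w l = y l.succ then (0 : ℝ) else 1 := by
        refine Finset.sum_pos' (fun l _ => by split_ifs <;> norm_num) ⟨l, Finset.mem_univ _, ?_⟩
        rw [if_neg hl]; norm_num
      refine aux_tendsto_sigmoid_atBot.comp ?_
      exact Filter.tendsto_atBot_add_const_left _ _
        (Filter.tendsto_id.const_mul_atTop_of_neg (neg_neg_of_pos hpos))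
  · refine ⟨fun _ _ => 0, fun t => -t, fun y => ?_⟩
    have : ¬ i = intval y / 2 := fun h => hw ⟨_, (aux_intval_half y).symm.trans h.symm⟩
    rw [if_neg this]
    simp only [zero_mul, Finset.sum_const_zero, zero_add]
    exact aux_tendsto_sigmoid_atBot.comp Filter.tendsto_neg_atTop_atBot

lemma aux_blk (B N : ℕ) (x : Fin B × Fin N) : finProdFinEquiv x = blk B N x.1 x.2 := by
  ext
  simp [blk, finProdFinEquiv, mul_comm, add_comm]

/-- Proposition 4: with `m = 2^(k-1) N` hidden units split into `2^(k-1)` consecutive blocks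
of `N` units, the kernel that, on input `y`, distributes block `⌊int(y)/2⌋` according to an
arbitrary product distribution `p(·|y) ∈ E_N` and sets all other blocks to zero with
probability one, lies in the closure of `F_{k,m}`. -/
theorem block_activation_kernel_mem_closure
    (k N : ℕ) (hk : 1 ≤ k) (hN : 1 ≤ N)
    (p : (Fin k → Bool) → (Fin N → Bool) → ℝ) (hp : ∀ y, p y ∈ Eset N) :
    (fun (y : Fin k → Bool) (h : Fin (2 ^ (k - 1) * N) → Bool) =>
      ∏ i : Fin (2 ^ (k - 1)),
        if (i : ℕ) = intval y / 2 then p y (fun j => h (blk (2 ^ (k - 1)) N i j))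
        else if ∀ j : Fin N, h (blk (2 ^ (k - 1)) N i j) = false then 1 else 0)
      ∈ closure (Fset k (2 ^ (k - 1) * N)) := by
  obtain ⟨k, rfl⟩ : ∃ k', k = k' + 1 := ⟨k - 1, by omega⟩
  rw [Nat.add_sub_cancel]
  choose q hq hpq using hp
  choose V c hVc using fun (i : Fin (2 ^ k)) (n : Fin N) =>
    aux_unit k (i : ℕ) (fun y => 1 - q y n)
      (fun y => ⟨by linarith [(hq y n).2], by linarith [(hq y n).1]⟩)
  let e : Fin (2 ^ k) × Fin N ≃ Fin (2 ^ k * N) := finProdFinEquiv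
  refine mem_closure_of_tendsto (b := Filter.atTop)
    (f := fun (t : ℝ) (y : Fin (k + 1) → Bool) (z : Fin (2 ^ k * N) → Bool) =>
      ∏ j, (if z j then sigmoid ((∑ l, V (e.symm j).1 (e.symm j).2 t l * bval (y l))
              + c (e.symm j).1 (e.symm j).2 t)
            else 1 - sigmoid ((∑ l, V (e.symm j).1 (e.symm j).2 t l * bval (y l))
              + c (e.symm j).1 (e.symm j).2 t))) ?_ ?_
  · rw [tendsto_pi_nhds]
    intro y
    rw [tendsto_pi_nhds]
    intro z
    have hlim : (∏ i : Fin (2 ^ k),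
        if (i : ℕ) = intval y / 2 then p y (fun j => z (blk (2 ^ k) N i j))
        else if ∀ j : Fin N, z (blk (2 ^ k) N i j) = false then (1 : ℝ) else 0)
        = ∏ j, (if z j then
            (if ((e.symm j).1 : ℕ) = intval y / 2 then 1 - q y (e.symm j).2 else 0)
          else 1 - (if ((e.symm j).1 : ℕ) = intval y / 2 then 1 - q y (e.symm j).2 else 0)) := by
      rw [← Equiv.prod_comp e, Fintype.prod_prod_type]
      refine Finset.prod_congr rfl fun i _ => ?_
      simp only [Equiv.symm_apply_apply]
      have he : ∀ n, e (i, n) = blk (2 ^ k) N i n := fun n => aux_blk _ _ (i, n)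
      simp only [he]
      by_cases h : (i : ℕ) = intval y / 2
      · simp only [if_pos h, hpq]
        refine Finset.prod_congr rfl fun n _ => ?_
        split_ifs <;> ring
      · simp only [if_neg h]
        by_cases h2 : ∀ j : Fin N, z (blk (2 ^ k) N i j) = false
        · rw [if_pos h2]
          symm
          refine Finset.prod_eq_one fun n _ => ?_
          simp [h2 n]
        · rw [if_neg h2]
          push Not at h2
          obtain ⟨n, hn⟩ := h2
          symm
          refine Finset.prod_eq_zero (Finset.mem_univ n) ?_
          simp [hn]
    rw [hlim]
    refine tendsto_finsetProd _ fun j _ => ?_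
    have hj := hVc (e.symm j).1 (e.symm j).2 y
    by_cases hz : z j = true
    · simp only [hz, if_true]
      exact hj
    · simp only [hz]
      exact tendsto_const_nhds.sub hj
  · exact Filter.Eventually.of_forall fun t =>
      ⟨fun j => V (e.symm j).1 (e.symm j).2 t, fun j => c (e.symm j).1 (e.symm j).2 t,
        fun _ _ => rfl⟩
end

section
/- Let n ≥ 1 and N = 2^n − 1. There exist a matrix W ∈ ℝ^{n×N} and a vector b ∈ ℝ^n such that for every z ∈ {0,1}^N the vector Wz + b lies in the l(z)-th open orthant of ℝ^n; that is, every entry of Wz + b is nonzero and the sign pattern satisfies int(hs(Wz+b)) = l(z), where hs is the entrywise Heaviside function (value 0 on negative entries, value 1 on positive entries). -/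
open Finset

theorem aux_lidx_succ {N : ℕ} (z : Fin (N + 1) → Bool) :
    lidx z = if z (Fin.last N) then N + 1 else lidx (fun i : Fin N => z i.castSucc) := by
  unfold lidx
  apply le_antisymm
  · apply Finset.sup_le
    intro j hj
    have hj' : z j = true := by simpa using hj
    split_ifs with h
    · have := j.isLt
      omega
    · induction j using Fin.lastCases with
      | last => exact absurd hj' h
      | cast k =>
        have hk : k ∈ Finset.univ.filter (fun i : Fin N => z i.castSucc = true) := by
          simpa using hj'
        exact Finset.le_sup (f := fun j : Fin N => (j : ℕ) + 1) hk
  · split_ifs with h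
    · have hk : Fin.last N ∈ Finset.univ.filter (fun i : Fin (N + 1) => z i = true) := by
        simpa using h
      exact Finset.le_sup (f := fun j : Fin (N + 1) => (j : ℕ) + 1) hk
    · apply Finset.sup_le
      intro k hk
      have hk : k.castSucc ∈ Finset.univ.filter (fun i : Fin (N + 1) => z i = true) := by
        simpa using hk
      exact Finset.le_sup (f := fun j : Fin (N + 1) => (j : ℕ) + 1) hk

theorem aux_lidx_le {N : ℕ} (z : Fin N → Bool) : lidx z ≤ N := by
  unfold lidx
  apply Finset.sup_le
  intro j _
  exact j.isLt

theorem aux_intval (n l : ℕ) : intval (binVec n l) = l % 2 ^ n := by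
  induction n with
  | zero => simp [intval, Nat.mod_one]
  | succ n ih =>
    unfold intval binVec at *
    rw [Fin.sum_univ_castSucc]
    simp only [Fin.val_castSucc, Fin.val_last]
    rw [ih, Nat.mod_pow_succ, Nat.testBit_eq_decide_div_mod_eq]
    rcases Nat.mod_two_eq_zero_or_one (l / 2 ^ n) with h | h <;> simp [h]

theorem aux_main (e : ℕ → Bool) (he : e 0 = false) : ∀ (N : ℕ) (z : Fin N → Bool),
    1 ≤ (if e (lidx z) then (1 : ℝ) else -1) *
      ((∑ i : Fin N, (if e ((i : ℕ) + 1) then (1 : ℝ) else -1) * 2 ^ ((i : ℕ) + 1) * bval (z i)) + -1) ∧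
    |(∑ i : Fin N, (if e ((i : ℕ) + 1) then (1 : ℝ) else -1) * 2 ^ ((i : ℕ) + 1) * bval (z i)) + -1|
      ≤ 2 ^ (N + 1) - 1 := by
  intro N
  induction N with
  | zero =>
    intro z
    have : lidx z = 0 := Nat.le_zero.1 (aux_lidx_le z)
    simp [this, he]
    norm_num
  | succ N ih =>
    intro z
    obtain ⟨h1, h2⟩ := ih (fun i => z i.castSucc)
    rw [Fin.sum_univ_castSucc, aux_lidx_succ]
    simp only [Fin.val_castSucc, Fin.val_last]
    generalize (∑ i : Fin N, (if e ((i : ℕ) + 1) then (1 : ℝ) else -1) * 2 ^ ((i : ℕ) + 1) *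
      bval (z i.castSucc)) = S at h1 h2 ⊢
    have hp : (2 : ℝ) ^ (N + 1 + 1) = 2 * 2 ^ (N + 1) := by ring
    have hpos : (0 : ℝ) < 2 ^ (N + 1) := by positivity
    rw [hp]
    rw [abs_le] at h2 ⊢
    cases hz : z (Fin.last N)
    · simp only [bval, Bool.false_eq_true, if_false, mul_zero, add_zero]
      exact ⟨h1, by linarith, by linarith⟩
    · simp only [if_true]
      rcases Bool.eq_false_or_eq_true (e (N + 1)) with hb | hb
      rotate_left
      · simp only [bval, hb, Bool.false_eq_true, if_false, if_true]
        refine ⟨?_, ?_, ?_⟩ <;> linarith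
      · simp only [bval, hb, if_true]
        refine ⟨?_, ?_, ?_⟩ <;> linarith

/-- Lemma 3: for `N = 2^n - 1` there is an affine map `z ↦ Wz + b` sending
`{z : l(z) = l}` into the `l`-th open orthant of `ℝ^n`, for every `l ∈ {0,…,N}`. -/
theorem affine_map_to_orthants (n : ℕ) (hn : 1 ≤ n) :
    ∃ (W : Fin n → Fin (2 ^ n - 1) → ℝ) (b : Fin n → ℝ),
      ∀ z : Fin (2 ^ n - 1) → Bool, ∃ s : Fin n → Bool,
        intval s = lidx z ∧
        ∀ j, (s j = true → 0 < (∑ i, W j i * bval (z i)) + b j) ∧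
             (s j = false → (∑ i, W j i * bval (z i)) + b j < 0) := by
  refine ⟨fun j i => (if Nat.testBit ((i : ℕ) + 1) j then (1 : ℝ) else -1) * 2 ^ ((i : ℕ) + 1),
    fun _ => -1, fun z => ⟨binVec n (lidx z), ?_, ?_⟩⟩
  · rw [aux_intval]
    apply Nat.mod_eq_of_lt
    have := aux_lidx_le z
    have : 0 < 2 ^ n := by positivity
    omega
  · intro j
    have h := (aux_main (fun l => Nat.testBit l j) (by simp) _ z).1
    constructor
    · intro hs
      simp only [binVec] at hs
      simp only [hs, if_true] at h
      linarith
    · intro hs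
      simp only [binVec] at hs
      simp only [hs, Bool.false_eq_true, if_false] at h
      linarith
end
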